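/- arXiv:1703.10646 — 2 statements merged into one kernel-verified Lean document; each statement's English description precedes it below -/
import Mathlib

section
/- Every ε ∈ {±1}⁴ with ε ≠ (1,1,1,1) restricts trivially to at most one of the four subgroups Λ₁, Λ₂, Λ₃, Λ₄; that is, there do not exist two distinct indices k ≠ l in {1,2,3,4} such that χ_ε takes the value 1 on all elements of Λ_k and on all elements of Λ_l. -/
noncomputable section

/-- The character χ_ε : ℤ⁴ → {±1}, χ_ε(a) = ε₁^{a₁}ε₂^{a₂}ε₃^{a₃}ε₄^{a₄}. -/
def chiE (ε : Fin 4 → ℤˣ) (a : Fin 4 → ℤ) : ℤˣ := ∏ i, ε i ^ a i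

/-- The subgroups Λ₁, Λ₂, Λ₃, Λ₄ of ℤ⁴ (coordinates w.r.t. (λ₁,λ₂,e₁,e₂)). -/
def Lam : Fin 4 → Set (Fin 4 → ℤ) :=
  ![{a | ∃ m n : ℤ, a = m • (![1, 0, 0, 0] : Fin 4 → ℤ) + n • ![0, 0, 1, 0]},
    {a | ∃ m n : ℤ, a = m • (![0, 1, 0, 0] : Fin 4 → ℤ) + n • ![0, 0, 0, 1]},
    {a | ∃ m n : ℤ, a = m • (![1, 1, 0, 0] : Fin 4 → ℤ) + n • ![0, 0, 1, 1]},
    {a | ∃ m n : ℤ, a = m • (![1, 1, 0, -1] : Fin 4 → ℤ) + n • ![0, 1, 1, 0]}]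

/-- The two conditions on the generators for each Λ. -/
lemma lam_cond (ε : Fin 4 → ℤˣ) (k : Fin 4) (h : ∀ a ∈ Lam k, chiE ε a = 1) :
    (k = 0 → ε 0 = 1 ∧ ε 2 = 1) ∧ (k = 1 → ε 1 = 1 ∧ ε 3 = 1) ∧
    (k = 2 → ε 0 * ε 1 = 1 ∧ ε 2 * ε 3 = 1) ∧
    (k = 3 → ε 0 * ε 1 * (ε 3)⁻¹ = 1 ∧ ε 1 * ε 2 = 1) := by
  refine ⟨?_, ?_, ?_, ?_⟩ <;> rintro rfl <;>
  · have h1 := h _ ⟨1, 0, rfl⟩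
    have h2 := h _ ⟨0, 1, rfl⟩
    simp [chiE, Fin.prod_univ_four] at h1 h2
    simp [h1, h2]

set_option maxHeartbeats 2000000 in
lemma finite_check : ∀ a b c d : ℤˣ, ∀ k l : Fin 4, k ≠ l →
    ((k = 0 → a = 1 ∧ c = 1) ∧ (k = 1 → b = 1 ∧ d = 1) ∧
    (k = 2 → a * b = 1 ∧ c * d = 1) ∧ (k = 3 → a * b * d⁻¹ = 1 ∧ b * c = 1)) →
    ((l = 0 → a = 1 ∧ c = 1) ∧ (l = 1 → b = 1 ∧ d = 1) ∧
    (l = 2 → a * b = 1 ∧ c * d = 1) ∧ (l = 3 → a * b * d⁻¹ = 1 ∧ b * c = 1)) →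
    a = 1 ∧ b = 1 ∧ c = 1 ∧ d = 1 := by
  intro a b c d k l
  rcases Int.units_eq_one_or a with rfl | rfl <;> rcases Int.units_eq_one_or b with rfl | rfl <;>
  rcases Int.units_eq_one_or c with rfl | rfl <;> rcases Int.units_eq_one_or d with rfl | rfl <;>
  fin_cases k <;> fin_cases l <;> simp

/-- Every non-trivial character χ_ε restricts trivially to at most one of
Λ₁, Λ₂, Λ₃, Λ₄. -/
theorem stmt6 (ε : Fin 4 → ℤˣ) (hε : ε ≠ ![1, 1, 1, 1]) :
    ¬ ∃ k l : Fin 4, k ≠ l ∧ (∀ a ∈ Lam k, chiE ε a = 1) ∧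
      (∀ a ∈ Lam l, chiE ε a = 1) := by
  rintro ⟨k, l, hkl, hk, hl⟩
  obtain ⟨h0, h1, h2, h3⟩ := finite_check _ _ _ _ k l hkl (lam_cond ε k hk) (lam_cond ε l hl)
  apply hε
  funext i
  fin_cases i <;> simp [h0, h1, h2, h3]
end
end

section
/- The matrices g₂ and g₃ satisfy g₂² = g₃³ = (g₂g₃)³ = −I₂ (where I₂ is the 2×2 identity matrix), and both g₂ and g₃ map the lattice Λ_A bijectively onto itself. -/
noncomputable section

/-- ζ = (1 + √3·i)/2, a primitive sixth root of unity. -/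
def ζ : ℂ := (1 + (Real.sqrt 3 : ℂ) * Complex.I) / 2

/-- g₂ = [[ζ, −1], [ζ, −ζ]]. -/
def g2 : Matrix (Fin 2) (Fin 2) ℂ := !![ζ, -1; ζ, -ζ]

/-- g₃ = [[0, ζ−1], [1−ζ, ζ−1]]. -/
def g3 : Matrix (Fin 2) (Fin 2) ℂ := !![0, ζ - 1; 1 - ζ, ζ - 1]

/-- The lattice Λ_A = ℤ𝐞₁ ⊕ ℤ𝐞₂ ⊕ ℤ𝐞₃ ⊕ ℤ𝐞₄ ⊂ ℂ², with
𝐞₁ = (1,0), 𝐞₂ = (ζ,1), 𝐞₃ = (0,1+ζ), 𝐞₄ = (0,2). -/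
def ΛA : Set (Fin 2 → ℂ) :=
  {v | ∃ a b c d : ℤ, v = (a : ℂ) • ![(1 : ℂ), 0] + (b : ℂ) • ![ζ, 1]
    + (c : ℂ) • ![(0 : ℂ), 1 + ζ] + (d : ℂ) • ![(0 : ℂ), 2]}

theorem zeta_sq : ζ ^ 2 = ζ - 1 := by
  have h : ((Real.sqrt 3 : ℝ) : ℂ) ^ 2 = 3 := by
    rw [← Complex.ofReal_pow, Real.sq_sqrt (by norm_num)]
    norm_num
  unfold ζ
  linear_combination (-1 / 4 : ℂ) * h + (((Real.sqrt 3 : ℝ) : ℂ) ^ 2 / 4) * Complex.I_sq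

theorem g2_sq : g2 ^ 2 = -1 := by
  have h := zeta_sq
  ext i j
  fin_cases i <;> fin_cases j <;> simp [g2, pow_succ, Matrix.mul_apply, Fin.sum_univ_two] <;>
    grind

theorem g3_cube : g3 ^ 3 = -1 := by
  have h := zeta_sq
  ext i j
  fin_cases i <;> fin_cases j <;> simp [g3, pow_succ, Matrix.mul_apply, Fin.sum_univ_two] <;>
    grind

theorem g23_cube : (g2 * g3) ^ 3 = -1 := by
  have h := zeta_sq
  have e : g2 * g3 = !![ζ - 1, -ζ; -1, 0] := by
    ext i j
    fin_cases i <;> fin_cases j <;> simp [g2, g3, Matrix.mul_apply, Fin.sum_univ_two] <;>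
      grind
  rw [e]
  ext i j
  fin_cases i <;> fin_cases j <;> simp [pow_succ, Matrix.mul_apply, Fin.sum_univ_two] <;>
    grind

theorem g2_maps : Set.MapsTo g2.mulVec ΛA ΛA := by
  have h := zeta_sq
  rintro _ ⟨a, b, c, d, rfl⟩
  refine ⟨-2 * b - c - 2 * d, a + b - c, a - 2 * c - 2 * d, -a - b + 2 * c + d, ?_⟩
  ext i
  fin_cases i <;> simp [g2, Matrix.mulVec, dotProduct, Fin.sum_univ_two] <;> grind

theorem g3_maps : Set.MapsTo g3.mulVec ΛA ΛA := by
  have h := zeta_sq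
  rintro _ ⟨a, b, c, d, rfl⟩
  refine ⟨-b - 2 * c - 2 * d, b + c + 2 * d, -a + b + c + 2 * d, a - b - 2 * c - 3 * d, ?_⟩
  ext i
  fin_cases i <;> simp [g3, Matrix.mulVec, dotProduct, Fin.sum_univ_two] <;> grind

theorem neg_mem_lattice {v : Fin 2 → ℂ} (hv : v ∈ ΛA) : -v ∈ ΛA := by
  obtain ⟨a, b, c, d, rfl⟩ := hv
  refine ⟨-a, -b, -c, -d, ?_⟩
  push_cast
  module

/-- A matrix preserving the lattice, with some power equal to `-1`, is bijective on it. -/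
theorem bijOn_of_pow {M : Matrix (Fin 2) (Fin 2) ℂ} (n : ℕ) (hM : M ^ (n + 1) = -1)
    (hmaps : Set.MapsTo M.mulVec ΛA ΛA) : Set.BijOn M.mulVec ΛA ΛA := by
  have hpow : ∀ k : ℕ, ∀ v ∈ ΛA, (M ^ k).mulVec v ∈ ΛA := by
    intro k
    induction k with
    | zero => intro v hv; simpa using hv
    | succ k ih =>
      intro v hv
      rw [pow_succ, ← Matrix.mulVec_mulVec]
      exact ih _ (hmaps hv)
  refine ⟨hmaps, ?_, ?_⟩
  · intro v _ w _ hvw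
    have h2 : (M ^ n).mulVec (M.mulVec v) = (M ^ n).mulVec (M.mulVec w) := congrArg _ hvw
    rw [Matrix.mulVec_mulVec, Matrix.mulVec_mulVec, ← pow_succ, hM] at h2
    simpa [Matrix.neg_mulVec] using h2
  · intro v hv
    refine ⟨(M ^ n).mulVec (-v), hpow n _ (neg_mem_lattice hv), ?_⟩
    rw [Matrix.mulVec_mulVec, ← pow_succ', hM]
    simp [Matrix.neg_mulVec]

/-- g₂² = g₃³ = (g₂g₃)³ = −I₂, and g₂, g₃ map Λ_A bijectively onto itself. -/
theorem stmt10 :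
    g2 ^ 2 = -1 ∧ g3 ^ 3 = -1 ∧ (g2 * g3) ^ 3 = -1 ∧
    Set.BijOn g2.mulVec ΛA ΛA ∧ Set.BijOn g3.mulVec ΛA ΛA := by
  exact ⟨g2_sq, g3_cube, g23_cube, bijOn_of_pow 1 g2_sq g2_maps, bijOn_of_pow 2 g3_cube g3_maps⟩
end
end
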